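/- For any permutation w with no descents at or after position n, there exist nonnegative integers c_{w,b} such that 𝔖_w = 𝔉_{L(w)} + Σ_{b > L(w)} c_{w,b} 𝔉_b, where L(w) is the Lehmer code of w and the sum is over weak compositions b of length n strictly dominating L(w). -/

import Mathlib

open scoped Classical

namespace SlidePaper

/-- Sum of the first `i` entries of a weak composition of length `n`. -/
def psum {n : ℕ} (a : Fin n → ℕ) (i : ℕ) : ℕ :=
  ∑ j ∈ Finset.univ.filter (fun j : Fin n => (j : ℕ) < i), a j

/-- `b` dominates `a`: all partial sums of `b` are at least those of `a`. -/
def Dominates {n : ℕ} (b a : Fin n → ℕ) : Prop :=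
  ∀ i : Fin (n + 1), psum a i ≤ psum b i

/-- The flattening of a weak composition: the list of its nonzero entries in order. -/
def flat {n : ℕ} (a : Fin n → ℕ) : List ℕ :=
  (List.ofFn a).filter (fun x => x ≠ 0)

/-- `β` refines `α`: `β` splits into consecutive blocks with sums `α₁, α₂, …`. -/
def Refines (β α : List ℕ) : Prop :=
  ∃ L : List (List ℕ), L.flatten = β ∧ L.map List.sum = α

/-- All weak compositions of length `n` with entries at most `k`. -/
def wcFinset (n k : ℕ) : Finset (Fin n → ℕ) :=
  Fintype.piFinset fun _ => Finset.range (k + 1)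

/-- The monomial slide polynomial `𝔐_a`. -/
noncomputable def slideM {n : ℕ} (a : Fin n → ℕ) : MvPolynomial (Fin n) ℤ :=
  ∑ b ∈ (wcFinset n (∑ i, a i)).filter (fun b => Dominates b a ∧ flat b = flat a),
    MvPolynomial.monomial (Finsupp.equivFunOnFinite.symm b) 1

/-- The fundamental slide polynomial `𝔉_a`. -/
noncomputable def slideF {n : ℕ} (a : Fin n → ℕ) : MvPolynomial (Fin n) ℤ :=
  ∑ b ∈ (wcFinset n (∑ i, a i)).filter (fun b => Dominates b a ∧ Refines (flat b) (flat a)),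
    MvPolynomial.monomial (Finsupp.equivFunOnFinite.symm b) 1

/-- A weak composition is quasi-flat if its nonzero entries occupy consecutive positions. -/
def QuasiFlat {n : ℕ} (a : Fin n → ℕ) : Prop :=
  ∀ i j l : Fin n, i ≤ j → j ≤ l → a i ≠ 0 → a l ≠ 0 → a j ≠ 0

/-- `b` strongly dominates `a`. -/
def StronglyDominates {n : ℕ} (b a : Fin n → ℕ) : Prop :=
  Dominates b a ∧ ∀ c : Fin n → ℕ, Dominates c a → flat c = flat b → Dominates c b

/-- The exponent vector placing the parts of `α` at the positions `i`. -/
noncomputable def placeExp {n : ℕ} (α : List ℕ) (i : Fin α.length → Fin n) : Fin n →₀ ℕ :=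
  ∑ t : Fin α.length, Finsupp.single (i t) (α.get t)

/-- `f` is quasisymmetric in the variables `x_1, …, x_k` (0-indexed: `x_0, …, x_{k-1}`). -/
def IsQuasisymmetricIn {n : ℕ} (k : ℕ) (f : MvPolynomial (Fin n) ℤ) : Prop :=
  ∀ α : List ℕ, (∀ x ∈ α, 0 < x) →
    ∀ i j : Fin α.length → Fin n, StrictMono i → StrictMono j →
      (∀ t, (i t : ℕ) < k) → (∀ t, (j t : ℕ) < k) →
      MvPolynomial.coeff (placeExp α i) f = MvPolynomial.coeff (placeExp α j) f

/-- The monomial quasisymmetric polynomial `M_α(x_1, …, x_k)` inside `ℤ[x_1, …, x_n]`. -/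
noncomputable def Mqs (n k : ℕ) (α : List ℕ) : MvPolynomial (Fin n) ℤ :=
  ∑ i ∈ (Finset.univ : Finset (Fin α.length → Fin n)).filter
      (fun i : Fin α.length → Fin n => StrictMono i ∧ ∀ t, (i t : ℕ) < k),
    ∏ t : Fin α.length, (MvPolynomial.X (i t) : MvPolynomial (Fin n) ℤ) ^ α.get t

/-- The fundamental quasisymmetric polynomial `F_α(x_1, …, x_k)` inside `ℤ[x_1, …, x_n]`. -/
noncomputable def Fqs (n k : ℕ) (α : List ℕ) : MvPolynomial (Fin n) ℤ :=
  ∑ c ∈ (Finset.univ : Finset (Composition α.sum)).filter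
      (fun c => Refines c.blocks α ∧ c.blocks.length ≤ k),
    Mqs n k c.blocks

/-- Place the weak composition `a` (of length `N`) at offset `k` inside length `M`. -/
def shiftComp {N : ℕ} (k M : ℕ) (a : Fin N → ℕ) : Fin M → ℕ :=
  fun i => if h : k ≤ (i : ℕ) ∧ (i : ℕ) - k < N then a ⟨(i : ℕ) - k, h.2⟩ else 0

/-- Spread the values `g` to positions `ι` inside a weak composition of length `n`. -/
def spread {l n : ℕ} (ι : Fin l → Fin n) (g : Fin l → ℕ) : Fin n → ℕ :=
  fun i => ∑ k, if ι k = i then g k else 0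

/-- The monomial quasisymmetric function `M_α` in infinitely many variables. -/
noncomputable def MqsFun (α : List ℕ) : MvPowerSeries ℕ ℤ :=
  fun d => if ∃ i : Fin α.length → ℕ, StrictMono i ∧
      d = ∑ t : Fin α.length, Finsupp.single (i t) (α.get t) then 1 else 0

/-- The fundamental quasisymmetric function `F_α` in infinitely many variables. -/
noncomputable def FqsFun (α : List ℕ) : MvPowerSeries ℕ ℤ :=
  ∑ c ∈ (Finset.univ : Finset (Composition α.sum)).filter (fun c => Refines c.blocks α),
    MqsFun c.blocks

/-- The cells of the Young diagram of `lam` (French notation): row `r` (from the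
bottom, 0-indexed) has `lam.get r` cells. -/
abbrev Cells (lam : List ℕ) := Σ r : Fin lam.length, Fin (lam.get r)

/-- A filling of `lam` with entries in `{1, …, n}` (encoded as `Fin n`) is a semistandard
Young tableau: rows weakly increase left to right, columns strictly increase bottom to top. -/
def IsSSYT {n : ℕ} {lam : List ℕ} (T : Cells lam → Fin n) : Prop :=
  (∀ (r : Fin lam.length) (c c' : Fin (lam.get r)), c ≤ c' → T ⟨r, c⟩ ≤ T ⟨r, c'⟩) ∧
  (∀ (r r' : Fin lam.length) (c' : Fin (lam.get r')) (h : (c' : ℕ) < lam.get r),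
      (r : ℕ) < (r' : ℕ) → T ⟨r, ⟨c', h⟩⟩ < T ⟨r', c'⟩)

/-- The weight of a filling: the `v`-th entry counts the occurrences of the value `v`. -/
def wtT {n : ℕ} {lam : List ℕ} (T : Cells lam → Fin n) : Fin n → ℕ :=
  fun v => (Finset.univ.filter (fun x : Cells lam => T x = v)).card

/-- A filling is quasi-Yamanouchi if for every value `v > 1`, the leftmost occurrence of `v`
lies weakly left of some occurrence of `v - 1`. -/
def IsQY {n : ℕ} {lam : List ℕ} (T : Cells lam → Fin n) : Prop :=
  ∀ (v : Fin n) (x : Cells lam), T x = v → 0 < (v : ℕ) →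
    (∀ y : Cells lam, T y = v → (x.2 : ℕ) ≤ (y.2 : ℕ)) →
    ∃ z : Cells lam, (T z : ℕ) + 1 = (v : ℕ) ∧ (x.2 : ℕ) ≤ (z.2 : ℕ)

/-- The Schur polynomial `s_lam(x_1, …, x_n)` as the generating function of
semistandard Young tableaux. -/
noncomputable def schurPoly (n : ℕ) (lam : List ℕ) : MvPolynomial (Fin n) ℤ :=
  ∑ T ∈ (Finset.univ : Finset (Cells lam → Fin n)).filter (fun T => IsSSYT T),
    MvPolynomial.monomial (Finsupp.equivFunOnFinite.symm (wtT T)) 1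

/-- One destandardization step on fillings: for some value `v` occurring in `T` whose
leftmost occurrence is strictly right of every occurrence of `v - 1`, every `v` is
decremented to `v - 1`. -/
def TabStep {n : ℕ} {lam : List ℕ} (T T' : Cells lam → Fin n) : Prop :=
  ∃ v : Fin n, 0 < (v : ℕ) ∧ (∃ x, T x = v) ∧
    (∀ x y : Cells lam, T x = v → (T y : ℕ) + 1 = (v : ℕ) → (y.2 : ℕ) < (x.2 : ℕ)) ∧
    ∀ x : Cells lam, (T' x : ℕ) = if T x = v then (v : ℕ) - 1 else (T x : ℕ)

/-- The reading word of a set of crosses: rows are read from top to bottom, each row from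
left to right, the cross in (0-indexed) row `i` and column `j` recording the letter `i + j`
(representing the simple transposition swapping `i + j` and `i + j + 1` of `{0, 1, 2, …}`). -/
def readWord (P : Finset (ℕ × ℕ)) : List ℕ :=
  ((List.range (P.sup Prod.fst + 1)).reverse).flatMap
    (fun i => ((List.range (P.sup Prod.snd + 1)).filter (fun j => decide ((i, j) ∈ P))).map
      (fun j => i + j))

/-- The permutation `s_{i_ℓ} ⋯ s_{i_1}` associated to the word `(i_1, …, i_ℓ)`,
where `s_k` swaps `k` and `k + 1`. -/
def wordPerm (l : List ℕ) : Equiv.Perm ℕ :=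
  ((l.map (fun k => Equiv.swap k (k + 1))).reverse).prod

/-- A word is reduced if no shorter word has the same product. -/
def IsReducedWord (l : List ℕ) : Prop :=
  ∀ l' : List ℕ, wordPerm l' = wordPerm l → l.length ≤ l'.length

/-- `P` is a reduced pipe dream of shape `w`: the pipes trace out `w` and no two pipes
cross more than once, equivalently the reading word of `P` is a reduced word for `w`. -/
def IsPD (w : Equiv.Perm ℕ) (P : Finset (ℕ × ℕ)) : Prop :=
  wordPerm (readWord P) = w ∧ IsReducedWord (readWord P)

/-- `P` is a quasi-Yamanouchi pipe dream of shape `w`: for every row, the westernmost cross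
is in the first column or lies weakly west of some cross in the row above. -/
def IsQPD (w : Equiv.Perm ℕ) (P : Finset (ℕ × ℕ)) : Prop :=
  IsPD w P ∧ ∀ i j : ℕ, (i, j) ∈ P → (∀ j', (i, j') ∈ P → j ≤ j') →
    (j = 0 ∨ ∃ j', (i + 1, j') ∈ P ∧ j ≤ j')

/-- One destandardization step on pipe dreams: a row with no cross in the first column,
all of whose crosses lie strictly east of every cross in the row above, has all its
crosses moved one step northwest. -/
def PDStep (P P' : Finset (ℕ × ℕ)) : Prop :=
  ∃ r : ℕ, (∃ j, (r, j) ∈ P) ∧ (r, 0) ∉ P ∧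
    (∀ j j', (r, j) ∈ P → (r + 1, j') ∈ P → j' < j) ∧
    P' = P.filter (fun p => p.1 ≠ r) ∪
      (P.filter (fun p => p.1 = r)).image (fun p => (r + 1, p.2 - 1))

/-- The number of crosses of `P` in (0-indexed) row `i`. -/
def rowWt (P : Finset (ℕ × ℕ)) (i : ℕ) : ℕ := (P.filter (fun p => p.1 = i)).card

/-- The weight of a pipe dream, as a weak composition of length `n`. -/
def wtFin (n : ℕ) (P : Finset (ℕ × ℕ)) : Fin n → ℕ := fun i => rowWt P (i : ℕ)

/-- The flattened weight of a pipe dream: the list of nonzero row counts, bottom row first. -/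
def flatWt (P : Finset (ℕ × ℕ)) : List ℕ :=
  ((List.range (P.sup Prod.fst + 1)).map (rowWt P)).filter (fun x => x ≠ 0)

/-- The Schubert polynomial of `w` in the variables `x_1, …, x_n`, as the generating
function of reduced pipe dreams of shape `w`. -/
noncomputable def SchubertPoly (n : ℕ) (w : Equiv.Perm ℕ) : MvPolynomial (Fin n) ℤ :=
  ∑ᶠ P ∈ {P : Finset (ℕ × ℕ) | IsPD w P},
    MvPolynomial.monomial (Finsupp.equivFunOnFinite.symm (wtFin n P)) 1

/-- The Lehmer code of `w` (0-indexed): `lehmer w i` counts `j > i` with `w j < w i`. -/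
noncomputable def lehmer (w : Equiv.Perm ℕ) (i : ℕ) : ℕ :=
  Set.ncard {j : ℕ | i < j ∧ w j < w i}

/-- The Lehmer code of `w` as a weak composition of length `n`. -/
noncomputable def lehmerFin (n : ℕ) (w : Equiv.Perm ℕ) : Fin n → ℕ :=
  fun i => lehmer w (i : ℕ)

/-- The number of inversions of `w`. -/
noncomputable def invCount (w : Equiv.Perm ℕ) : ℕ :=
  Set.ncard {p : ℕ × ℕ | p.1 < p.2 ∧ w p.2 < w p.1}

/-- The largest entry of the Lehmer code of `w`. -/
noncomputable def maxLehmer (w : Equiv.Perm ℕ) : ℕ :=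
  sSup (Set.range (lehmer w))

/-- The (0-indexed) position of the first descent of `w`. -/
noncomputable def firstDescent (w : Equiv.Perm ℕ) : ℕ :=
  sInf {i : ℕ | w (i + 1) < w i}

/-- `δ(w) = 1` if every position attaining `max(L(w))` is at or before the first descent,
and `δ(w) = 0` otherwise. -/
noncomputable def delta (w : Equiv.Perm ℕ) : ℤ :=
  if ∀ i : ℕ, lehmer w i = maxLehmer w → i ≤ firstDescent w then 1 else 0

/-- `η(w) = inv(w) − max(L(w)) + δ(w) − min{i : w_i > w_{i+1}}`. -/
noncomputable def eta (w : Equiv.Perm ℕ) : ℤ :=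
  (invCount w : ℤ) - (maxLehmer w : ℤ) + delta w - ((firstDescent w : ℤ) + 1)

/-- The decomposition of a list into maximal strictly increasing runs. -/
def runsStrict : List ℕ → List (List ℕ)
  | [] => []
  | x :: rest =>
    match runsStrict rest, rest with
    | r :: rs, y :: _ => if x < y then (x :: r) :: rs else [x] :: r :: rs
    | _, _ => [[x]]

/-- The descent composition of a word: lengths of its maximal increasing runs, a new run
beginning whenever a letter is followed by a weakly smaller letter. -/
def desStrict (l : List ℕ) : List ℕ := (runsStrict l).map List.length

/-- The decomposition of a list into maximal weakly increasing runs. -/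
def runsWeak : List ℕ → List (List ℕ)
  | [] => []
  | x :: rest =>
    match runsWeak rest, rest with
    | r :: rs, y :: _ => if x ≤ y then (x :: r) :: rs else [x] :: r :: rs
    | _, _ => [[x]]

/-- The descent composition of a word: the lengths of its maximal weakly increasing runs. -/
def desComp (l : List ℕ) : List ℕ := (runsWeak l).map List.length

/-- The permutation `1^m × w`, fixing `0, …, m-1` and acting by `w` shifted by `m` above. -/
def shiftPerm (m : ℕ) (w : Equiv.Perm ℕ) : Equiv.Perm ℕ where
  toFun i := if i < m then i else w (i - m) + m
  invFun i := if i < m then i else w.symm (i - m) + m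
  left_inv i := by
    dsimp only
    by_cases h : i < m
    · simp [h]
    · have h2 : ¬ (w (i - m) + m < m) := by omega
      rw [if_neg h, if_neg h2, Nat.add_sub_cancel, Equiv.symm_apply_apply]
      omega
  right_inv i := by
    dsimp only
    by_cases h : i < m
    · simp [h]
    · have h2 : ¬ (w.symm (i - m) + m < m) := by omega
      rw [if_neg h, if_neg h2, Nat.add_sub_cancel, Equiv.apply_symm_apply]
      omega

/-- The quasi-shuffle product of two (strong) compositions, as a multiset of compositions. -/
def qShuffle : List ℕ → List ℕ → Multiset (List ℕ)
  | [], β => {β}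
  | α, [] => {α}
  | a :: α, b :: β =>
      ((qShuffle α (b :: β)).map (a :: ·)) + ((qShuffle (a :: α) β).map (b :: ·)) +
        ((qShuffle α β).map ((a + b) :: ·))
termination_by α β => α.length + β.length
decreasing_by all_goals (simp only [List.length_cons]; omega)

def shuffles : List ℕ → List ℕ → Multiset (List ℕ)
  | [], B => {B}
  | A, [] => {A}
  | x :: A, y :: B =>
      ((shuffles A (y :: B)).map (x :: ·)) + ((shuffles (x :: A) B).map (y :: ·))
termination_by A B => A.length + B.length
decreasing_by all_goals (simp only [List.length_cons]; omega)

/-- The word `(2n-1)^{a_1} (2n-3)^{a_2} ⋯ 1^{a_n}` associated to a weak composition `a`. -/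
def wordA {n : ℕ} (a : Fin n → ℕ) : List ℕ :=
  (List.ofFn (fun i : Fin n => List.replicate (a i) (2 * n - 2 * (i : ℕ) - 1))).flatten

/-- The word `(2n)^{b_1} (2n-2)^{b_2} ⋯ 2^{b_n}` associated to a weak composition `b`. -/
def wordB {n : ℕ} (b : Fin n → ℕ) : List ℕ :=
  (List.ofFn (fun i : Fin n => List.replicate (b i) (2 * n - 2 * (i : ℕ)))).flatten

/-- A list (padded with trailing zeros) dominates a weak composition of length `n`. -/
def DominatesList {n : ℕ} (l : List ℕ) (a : Fin n → ℕ) : Prop :=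
  ∀ i : Fin (n + 1), psum a (i : ℕ) ≤ ((l.take (i : ℕ)).sum)

/-- The number of letters of the `A`-word (the odd letters) in the `k`-th weakly
increasing run of `C`. -/
def runCountA (C : List ℕ) (k : Fin (runsWeak C).length) : ℕ :=
  (((runsWeak C).get k).filter (fun z => z % 2 = 1)).length

/-- The number of letters of the `B`-word (the even letters) in the `k`-th weakly
increasing run of `C`. -/
def runCountB (C : List ℕ) (k : Fin (runsWeak C).length) : ℕ :=
  (((runsWeak C).get k).filter (fun z => z % 2 = 0)).length

/-- The length of the `k`-th weakly increasing run of `C`. -/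
def runLen (C : List ℕ) (k : Fin (runsWeak C).length) : ℕ :=
  ((runsWeak C).get k).length

/-- `c = bump_{(a,b)}(C)`: the unique weak composition of length `n` obtained by inserting
zero parts into `Des(C)` so that the correspondingly placed `Des_A` and `Des_B` dominate
`a` and `b`, minimal in dominance order among all such insertions. -/
def IsBumpS {n : ℕ} (a b : Fin n → ℕ) (C : List ℕ) (c : Fin n → ℕ) : Prop :=
  ∃ ι : Fin (runsWeak C).length → Fin n, StrictMono ι ∧
    c = spread ι (runLen C) ∧
    Dominates (spread ι (runCountA C)) a ∧ Dominates (spread ι (runCountB C)) b ∧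
    ∀ ι' : Fin (runsWeak C).length → Fin n, StrictMono ι' →
      Dominates (spread ι' (runCountA C)) a → Dominates (spread ι' (runCountB C)) b →
      Dominates (spread ι' (runLen C)) c

/-- The multiplicity `[c ∣ a ⧢ b]` of `c` in the slide product of `a` and `b`: the number of
shuffles `C` of the words of `a` and `b` lying in the shuffle set `SS(a,b)` with
`bump_{(a,b)}(C) = c`. -/
noncomputable def slideMult {n : ℕ} (a b c : Fin n → ℕ) : ℕ :=
  Multiset.card ((shuffles (wordA a) (wordB b)).filter
    (fun C => DominatesList ((runsWeak C).map
        (fun r => (r.filter (fun z => z % 2 = 1)).length)) a ∧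
      DominatesList ((runsWeak C).map (fun r => (r.filter (fun z => z % 2 = 0)).length)) b ∧
      IsBumpS a b C c))

/-- Membership in the quasi-shuffle set `QSS(a,b)`: a pair `(γ_a, γ_b)` of weak compositions
of a common length at most `n` with `γ_a ≥ a`, `flat(γ_a) = flat(a)`, `γ_b ≥ b`,
`flat(γ_b) = flat(b)` (after padding with trailing zeros), and all entries of
`γ_a + γ_b` positive. -/
def InQSS {n : ℕ} (a b : Fin n → ℕ) (x : (l : ℕ) × (Fin l → ℕ) × (Fin l → ℕ)) : Prop :=
  x.1 ≤ n ∧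
  Dominates (shiftComp 0 n x.2.1) a ∧ flat x.2.1 = flat a ∧
  Dominates (shiftComp 0 n x.2.2) b ∧ flat x.2.2 = flat b ∧
  ∀ k : Fin x.1, 0 < x.2.1 k + x.2.2 k

/-- `c = bump_{(a,b)}(γ_a, γ_b)`: the unique weak composition `c` of length `n` with
`flat(c) = γ_a + γ_b` whose decomposition `c = c_a + c_b` satisfies `c_a ≥ a` and
`c_b ≥ b`, minimal in dominance order among all such compositions. -/
def IsBumpQ {n : ℕ} (a b : Fin n → ℕ) (x : (l : ℕ) × (Fin l → ℕ) × (Fin l → ℕ))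
    (c : Fin n → ℕ) : Prop :=
  ∃ ι : Fin x.1 → Fin n, StrictMono ι ∧
    c = spread ι (fun k => x.2.1 k + x.2.2 k) ∧
    Dominates (spread ι x.2.1) a ∧ Dominates (spread ι x.2.2) b ∧
    ∀ ι' : Fin x.1 → Fin n, StrictMono ι' →
      Dominates (spread ι' x.2.1) a → Dominates (spread ι' x.2.2) b →
      Dominates (spread ι' (fun k => x.2.1 k + x.2.2 k)) c

/-- The multiplicity `[c ∣ a ⧻ b]` of `c` in the quasi-slide product of `a` and `b`: the
number of pairs in the quasi-shuffle set `QSS(a,b)` whose bump is `c`. -/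
noncomputable def qsMult {n : ℕ} (a b c : Fin n → ℕ) : ℕ :=
  Nat.card {x : (l : ℕ) × (Fin l → ℕ) × (Fin l → ℕ) // InQSS a b x ∧ IsBumpQ a b x c}

/-- The Stanley symmetric function `S_w`. -/
noncomputable def StanleySym (w : Equiv.Perm ℕ) : MvPowerSeries ℕ ℤ :=
  ∑ᶠ l ∈ {l : List ℕ | wordPerm l = w ∧ IsReducedWord l}, FqsFun (desStrict l)

/-- The reading order on crosses: higher rows first, and each row from left to right. -/
def ReadsBefore (p q : ℕ × ℕ) : Prop := q.1 < p.1 ∨ (p.1 = q.1 ∧ p.2 < q.2)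

theorem ReadsBefore.trans {p q r : ℕ × ℕ} (h : ReadsBefore p q) (h' : ReadsBefore q r) :
    ReadsBefore p r := by
  unfold ReadsBefore at *; omega

/-- The crosses of `P` in reading order. -/
def crossList (P : Finset (ℕ × ℕ)) : List (ℕ × ℕ) :=
  ((List.range (P.sup Prod.fst + 1)).reverse).flatMap
    (fun i => ((List.range (P.sup Prod.snd + 1)).filter (fun j => decide ((i, j) ∈ P))).map
      (fun j => (i, j)))

theorem readWord_eq_map (P : Finset (ℕ × ℕ)) :
    readWord P = (crossList P).map (fun p => p.1 + p.2) := by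
  simp [readWord, crossList, List.map_flatMap, Function.comp_def]

theorem mem_crossList {P : Finset (ℕ × ℕ)} {p : ℕ × ℕ} : p ∈ crossList P ↔ p ∈ P := by
  obtain ⟨i, j⟩ := p
  simp only [crossList, List.mem_flatMap, List.mem_reverse, List.mem_range, List.mem_map,
    List.mem_filter, decide_eq_true_eq, Prod.mk.injEq]
  constructor
  · rintro ⟨a, -, b, ⟨-, h⟩, rfl, rfl⟩
    exact h
  · intro h
    exact ⟨i, Nat.lt_succ_of_le (Finset.le_sup (f := Prod.fst) h), j,
      ⟨Nat.lt_succ_of_le (Finset.le_sup (f := Prod.snd) h), h⟩, rfl, rfl⟩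

theorem pairwise_crossList (P : Finset (ℕ × ℕ)) : (crossList P).Pairwise ReadsBefore := by
  rw [crossList, List.pairwise_flatMap]
  constructor
  · intro i _
    rw [List.pairwise_map]
    exact (List.pairwise_lt_range.filter _).imp (fun h => Or.inr ⟨rfl, h⟩)
  · rw [List.pairwise_reverse]
    refine List.pairwise_lt_range.imp ?_
    intro a b hab x hx y hy
    simp only [List.mem_map] at hx hy
    obtain ⟨_, -, rfl⟩ := hx
    obtain ⟨_, -, rfl⟩ := hy
    exact Or.inl hab

theorem eq_of_pairwise_readsBefore {l l' : List (ℕ × ℕ)} (hl : l.Pairwise ReadsBefore)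
    (hl' : l'.Pairwise ReadsBefore) (h : ∀ p, p ∈ l ↔ p ∈ l') : l = l' := by
  have nd : ∀ {m : List (ℕ × ℕ)}, m.Pairwise ReadsBefore → m.Nodup := fun hm =>
    hm.imp (fun {a b} hab => by rintro rfl; unfold ReadsBefore at hab; omega)
  refine List.Perm.eq_of_pairwise (le := ReadsBefore) ?_ hl hl'
    ((List.perm_ext_iff_of_nodup (nd hl) (nd hl')).2 h)
  intro a b _ _ h1 h2
  unfold ReadsBefore at *; omega

theorem crossList_eq {P : Finset (ℕ × ℕ)} {l : List (ℕ × ℕ)} (hl : l.Pairwise ReadsBefore)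
    (h : ∀ p, p ∈ l ↔ p ∈ P) : crossList P = l :=
  eq_of_pairwise_readsBefore (pairwise_crossList P) hl (fun p => by rw [mem_crossList, h])

theorem mem_readWord {P : Finset (ℕ × ℕ)} {a : ℕ} :
    a ∈ readWord P ↔ ∃ p ∈ P, p.1 + p.2 = a := by
  simp [readWord_eq_map, mem_crossList]

theorem nodup_crossList (P : Finset (ℕ × ℕ)) : (crossList P).Nodup :=
  (pairwise_crossList P).imp
    (fun {a b} hab => by rintro rfl; unfold ReadsBefore at hab; omega)

theorem length_readWord (P : Finset (ℕ × ℕ)) : (readWord P).length = P.card := by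
  rw [readWord_eq_map, List.length_map, ← List.toFinset_card_of_nodup (nodup_crossList P)]
  congr 1
  ext p
  simp [mem_crossList]

theorem readWord_union {P Q : Finset (ℕ × ℕ)} (h : ∀ p ∈ P, ∀ q ∈ Q, q.1 < p.1) :
    readWord (P ∪ Q) = readWord P ++ readWord Q := by
  have : crossList (P ∪ Q) = crossList P ++ crossList Q := by
    refine crossList_eq ?_ ?_
    · rw [List.pairwise_append]
      exact ⟨pairwise_crossList P, pairwise_crossList Q, fun p hp q hq =>
        Or.inl (h p (mem_crossList.1 hp) q (mem_crossList.1 hq))⟩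
    · intro p
      simp [mem_crossList]
  simp [readWord_eq_map, this]

/-! ### Pipe dreams with a given reading word -/

/-- The row sequence `s` is compatible with the word `f 0, …, f (l - 1)`. -/
def Compat (l : ℕ) (f s : ℕ → ℕ) : Prop :=
  (∀ t < l, s t ≤ f t) ∧
    ∀ t, t + 1 < l → s (t + 1) ≤ s t ∧ (f (t + 1) ≤ f t → s (t + 1) < s t)

/-- The set of crosses whose `t`-th cross in reading order lies in row `s t` and records
the letter `f t`. -/
def ofSeq (l : ℕ) (f s : ℕ → ℕ) : Finset (ℕ × ℕ) :=
  (Finset.range l).image (fun t => (s t, f t - s t))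

theorem Compat.readsBefore {l : ℕ} {f s : ℕ → ℕ} (h : Compat l f s) {t t' : ℕ} (htt : t < t')
    (ht' : t' < l) : ReadsBefore (s t, f t - s t) (s t', f t' - s t') := by
  induction t', htt using Nat.le_induction with
  | base =>
    have h1 := h.1 t (by omega)
    have h2 := h.1 (t + 1) (by omega)
    have h3 := h.2 t ht'
    unfold ReadsBefore
    simp only [Nat.succ_eq_add_one]
    omega
  | succ m hm ih =>
    refine (ih (by omega)).trans ?_
    have h1 := h.1 m (by omega)
    have h2 := h.1 (m + 1) (by omega)
    have h3 := h.2 m ht'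
    unfold ReadsBefore
    simp only
    omega

theorem Compat.antitone {l : ℕ} {f s : ℕ → ℕ} (h : Compat l f s) {t t' : ℕ} (htt : t ≤ t')
    (ht' : t' < l) : s t' ≤ s t := by
  rcases htt.eq_or_lt with rfl | h1
  · exact le_rfl
  · have := h.readsBefore h1 ht'
    unfold ReadsBefore at this
    simp only at this
    omega

theorem Compat.crossList_ofSeq {l : ℕ} {f s : ℕ → ℕ} (h : Compat l f s) :
    crossList (ofSeq l f s) = (List.range l).map (fun t => (s t, f t - s t)) := by
  refine crossList_eq ?_ ?_
  · rw [List.pairwise_map]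
    refine List.pairwise_lt_range.imp_of_mem ?_
    intro a b _ hb hab
    exact h.readsBefore hab (List.mem_range.1 hb)
  · intro p
    simp [ofSeq]

theorem Compat.readWord_ofSeq {l : ℕ} {f s : ℕ → ℕ} (h : Compat l f s) :
    readWord (ofSeq l f s) = (List.range l).map f := by
  rw [readWord_eq_map, h.crossList_ofSeq, List.map_map]
  refine List.map_congr_left ?_
  intro t ht
  have := h.1 t (List.mem_range.1 ht)
  simp only [Function.comp_apply]
  omega

theorem exists_compat (P : Finset (ℕ × ℕ)) :
    ∃ s, Compat (readWord P).length (fun t => (readWord P).getD t 0) s ∧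
      P = ofSeq (readWord P).length (fun t => (readWord P).getD t 0) s := by
  have hlen : (readWord P).length = (crossList P).length := by simp [readWord_eq_map]
  have hget : ∀ t (ht : t < (crossList P).length), (readWord P).getD t 0 =
      ((crossList P)[t]).1 + ((crossList P)[t]).2 := by
    intro t ht
    rw [List.getD_eq_getElem _ _ (by omega)]
    simp [readWord_eq_map]
  have hs : ∀ t (ht : t < (crossList P).length),
      ((crossList P).getD t (0, 0)) = (crossList P)[t] := fun t ht =>
    List.getD_eq_getElem _ _ ht
  refine ⟨fun t => ((crossList P).getD t (0, 0)).1, ⟨?_, ?_⟩, ?_⟩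
  · intro t ht
    rw [hlen] at ht
    simp only [hget t ht, hs t ht]
    omega
  · intro t ht
    rw [hlen] at ht
    have := List.pairwise_iff_getElem.1 (pairwise_crossList P) t (t + 1) (by omega) ht (by omega)
    simp only [hget t (by omega), hs t (by omega), hget (t + 1) ht, hs (t + 1) ht]
    unfold ReadsBefore at this
    omega
  · ext p
    rw [← mem_crossList, List.mem_iff_getElem]
    simp only [ofSeq, Finset.mem_image, Finset.mem_range]
    constructor
    · rintro ⟨t, ht, rfl⟩
      refine ⟨t, by omega, ?_⟩
      rw [hget t ht, hs t ht]
      simp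
    · rintro ⟨t, ht, rfl⟩
      rw [hlen] at ht
      refine ⟨t, ht, ?_⟩
      rw [hget t ht, hs t ht]
      simp

/-- The number of terms of `s 0, …, s (l - 1)` that are at least `k`. -/
def countGE (s : ℕ → ℕ) (l k : ℕ) : ℕ := ((Finset.range l).filter (fun t => k ≤ s t)).card

theorem eq_range_card {D : Finset ℕ} (h : ∀ t ∈ D, ∀ u < t, u ∈ D) :
    D = Finset.range D.card := by
  refine Finset.eq_of_subset_of_card_le ?_ (by simp)
  intro t ht
  have : Finset.range (t + 1) ⊆ D := by
    intro u hu
    rcases (Nat.lt_succ_iff.1 (Finset.mem_range.1 hu)).eq_or_lt with rfl | h1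
    · exact ht
    · exact h t ht u h1
  have := Finset.card_le_card this
  simp at this ⊢
  omega

theorem Compat.le_iff_lt_countGE {l : ℕ} {f s : ℕ → ℕ} (h : Compat l f s) {t : ℕ} (ht : t < l)
    (k : ℕ) : k ≤ s t ↔ t < countGE s l k := by
  have := eq_range_card (D := (Finset.range l).filter (fun t => k ≤ s t)) (by
    intro t ht u hu
    simp only [Finset.mem_filter, Finset.mem_range] at *
    exact ⟨by omega, ht.2.trans (h.antitone hu.le ht.1)⟩)
  rw [countGE, ← Finset.mem_range, ← this]
  simp [ht]

theorem countGE_le (s : ℕ → ℕ) (l k : ℕ) : countGE s l k ≤ l := by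
  simpa [countGE] using Finset.card_filter_le (Finset.range l) (fun t => k ≤ s t)

theorem Compat.injOn {l : ℕ} {f s : ℕ → ℕ} (h : Compat l f s) :
    Set.InjOn (fun t => (s t, f t - s t)) (Finset.range l) := by
  intro a ha b hb hab
  simp only [Finset.coe_range, Set.mem_Iio] at ha hb
  rcases lt_trichotomy a b with h1 | h1 | h1
  · have := h.readsBefore h1 hb
    unfold ReadsBefore at this
    simp only [Prod.mk.injEq] at hab this
    omega
  · exact h1
  · have := h.readsBefore h1 ha
    unfold ReadsBefore at this
    simp only [Prod.mk.injEq] at hab this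
    omega

theorem Compat.card_filter_ofSeq {l : ℕ} {f s : ℕ → ℕ} (h : Compat l f s) (k : ℕ) :
    ((ofSeq l f s).filter (fun p => k ≤ p.1)).card = countGE s l k := by
  rw [ofSeq, Finset.filter_image, Finset.card_image_of_injOn]
  · rfl
  · exact h.injOn.mono (by intro x; simp; tauto)

theorem Compat.card_ofSeq {l : ℕ} {f s : ℕ → ℕ} (h : Compat l f s) : (ofSeq l f s).card = l := by
  rw [ofSeq, Finset.card_image_of_injOn h.injOn, Finset.card_range]

/-- The pointwise largest candidate for a row sequence compatible with `f`. -/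
def maxSeq (f : ℕ → ℕ) : ℕ → ℕ
  | 0 => f 0
  | t + 1 => if f t < f (t + 1) then maxSeq f t else min (f (t + 1)) (maxSeq f t - 1)

theorem maxSeq_le (f : ℕ → ℕ) (t : ℕ) : maxSeq f t ≤ f t := by
  induction t with
  | zero => exact le_rfl
  | succ t ih =>
    rw [maxSeq]
    split_ifs <;> omega

theorem Compat.le_maxSeq {l : ℕ} {f s : ℕ → ℕ} (h : Compat l f s) {t : ℕ} (ht : t < l) :
    s t ≤ maxSeq f t := by
  induction t with
  | zero => exact h.1 0 ht
  | succ t ih =>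
    have := ih (by omega)
    have h2 := h.2 t ht
    have h3 := h.1 _ ht
    rw [maxSeq]
    split_ifs <;> omega

theorem Compat.maxSeq {l : ℕ} {f s : ℕ → ℕ} (h : Compat l f s) : Compat l f (maxSeq f) := by
  refine ⟨fun t _ => maxSeq_le f t, fun t ht => ?_⟩
  have h1 := h.le_maxSeq (t := t) (by omega)
  have h2 := h.2 t ht
  rw [SlidePaper.maxSeq]
  split_ifs <;> omega

theorem le_of_maxSeq_lt {f : ℕ → ℕ} {t : ℕ} (h : maxSeq f (t + 1) < maxSeq f t) :
    f (t + 1) ≤ f t := by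
  by_contra! h1
  rw [maxSeq, if_pos h1] at h
  omega

/-! ### Partial sums -/

theorem psum_le_psum {n : ℕ} (a : Fin n → ℕ) {i j : ℕ} (h : i ≤ j) : psum a i ≤ psum a j := by
  unfold psum
  refine Finset.sum_le_sum_of_subset ?_
  intro x
  simp only [Finset.mem_filter, Finset.mem_univ, true_and]
  omega

theorem psum_zero {n : ℕ} (a : Fin n → ℕ) : psum a 0 = 0 := by simp [psum]

theorem psum_of_le {n : ℕ} (a : Fin n → ℕ) {k : ℕ} (h : n ≤ k) : psum a k = ∑ i, a i := by
  unfold psum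
  rw [Finset.filter_true_of_mem]
  intro x _
  omega

theorem psum_succ {n : ℕ} (a : Fin n → ℕ) (i : Fin n) : psum a (i + 1) = psum a i + a i := by
  unfold psum
  have : Finset.univ.filter (fun j : Fin n => (j : ℕ) < i + 1) =
      insert i (Finset.univ.filter (fun j : Fin n => (j : ℕ) < i)) := by
    ext j
    simp only [Finset.mem_filter, Finset.mem_univ, true_and, Finset.mem_insert, Fin.ext_iff]
    omega
  rw [this, Finset.sum_insert (by simp), add_comm]

theorem eq_of_psum_eq {n : ℕ} {a b : Fin n → ℕ} (h : ∀ k ≤ n, psum a k = psum b k) : a = b := by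
  funext i
  have h1 := h i i.2.le
  have h2 := h (i + 1) i.2
  rw [psum_succ, psum_succ] at h2
  omega

theorem dominates_iff {n : ℕ} {a b : Fin n → ℕ} :
    Dominates b a ↔ ∀ k ≤ n, psum a k ≤ psum b k :=
  ⟨fun h k hk => h ⟨k, Nat.lt_succ_of_le hk⟩, fun h i => h i (Nat.le_of_lt_succ i.2)⟩

theorem Dominates.antisymm {n : ℕ} {a b : Fin n → ℕ} (h : Dominates b a) (h' : Dominates a b) :
    a = b :=
  eq_of_psum_eq fun k hk => le_antisymm (dominates_iff.1 h k hk) (dominates_iff.1 h' k hk)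

theorem psum_rowWt {n : ℕ} (P : Finset (ℕ × ℕ)) {k : ℕ} (hk : k ≤ n) :
    psum (fun i : Fin n => rowWt P i) k = (P.filter (fun p => p.1 < k)).card := by
  induction k with
  | zero => simp [psum_zero]
  | succ k ih =>
    have h1 := psum_succ (fun i : Fin n => rowWt P i) ⟨k, hk⟩
    simp only at h1
    rw [h1, ih (by omega), rowWt, ← Finset.card_union_of_disjoint]
    · congr 1
      ext p
      simp only [Finset.mem_union, Finset.mem_filter, Nat.lt_succ_iff_lt_or_eq]
      tauto
    · rw [Finset.disjoint_filter]
      intro p _ h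
      omega

theorem psum_rowWt_add {n : ℕ} (P : Finset (ℕ × ℕ)) {k : ℕ} (hk : k ≤ n) :
    psum (fun i : Fin n => rowWt P i) k + (P.filter (fun p => k ≤ p.1)).card = P.card := by
  rw [psum_rowWt P hk, ← Finset.card_filter_add_card_filter_not (s := P) (fun p => p.1 < k)]
  simp only [not_lt]

theorem psum_wtFin_ofSeq {n l : ℕ} {f s : ℕ → ℕ} (h : Compat l f s) {k : ℕ} (hk : k ≤ n) :
    psum (wtFin n (ofSeq l f s)) k + countGE s l k = l := by
  have := psum_rowWt_add (ofSeq l f s) hk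
  rwa [h.card_filter_ofSeq, h.card_ofSeq] at this

/-! ### Refinement and partial sums -/

theorem refines_iff {α β : List ℕ} (hβ : ∀ x ∈ β, x ≠ 0) :
    Refines β α ↔ α.sum = β.sum ∧ ∀ k, ∃ k', (α.take k).sum = (β.take k').sum := by
  constructor
  · rintro ⟨L, rfl, rfl⟩
    refine ⟨by rw [List.sum_flatten], fun k => ?_⟩
    refine ⟨((L.take k).flatten).length, ?_⟩
    rw [← List.map_take, ← List.sum_flatten]
    congr 1
    conv_rhs => rw [← List.take_append_drop k L, List.flatten_append]
    rw [List.take_left']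
    simp
  · rintro ⟨h1, h2⟩
    induction α generalizing β with
    | nil =>
      have : β = [] := by
        cases β with
        | nil => rfl
        | cons x β =>
          have := hβ x (by simp)
          simp at h1
          omega
      exact ⟨[], by simp [this]⟩
    | cons x α ih =>
      obtain ⟨m, hm⟩ := h2 1
      simp only [List.take_succ_cons, List.take_zero, List.sum_cons, List.sum_nil,
        add_zero] at hm
      have hsplit : ∀ k', m ≤ k' → (β.take k').sum = x + ((β.drop m).take (k' - m)).sum := by
        intro k' hk
        rw [hm, ← List.sum_append, ← List.take_add]
        congr 2
        omega
      obtain ⟨L, hL1, hL2⟩ := ih (β := β.drop m) (fun y hy => hβ y (List.mem_of_mem_drop hy))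
        (by
          have := List.sum_take_add_sum_drop β m
          simp only [List.sum_cons] at h1
          omega)
        (by
          intro k
          obtain ⟨k', hk'⟩ := h2 (k + 1)
          simp only [List.take_succ_cons, List.sum_cons] at hk'
          rcases le_total m k' with h | h
          · refine ⟨k' - m, ?_⟩
            rw [hsplit k' h] at hk'
            omega
          · refine ⟨0, ?_⟩
            have : (β.take k').sum ≤ (β.take m).sum :=
              (List.take_sublist_take_left h).sum_le_sum (by simp)
            simp only [List.take_zero, List.sum_nil]
            omega)
      exact ⟨β.take m :: L, by simp [hL1], by simp [hL2, hm]⟩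

theorem exists_sum_take_filter (l : List ℕ) (k : ℕ) :
    ∃ k' ≤ l.length, (l.take k').sum = ((l.filter (fun x => x ≠ 0)).take k).sum := by
  induction l generalizing k with
  | nil => exact ⟨0, by simp⟩
  | cons x l ih =>
    by_cases hx : x = 0
    · obtain ⟨k', h1, h2⟩ := ih k
      exact ⟨k' + 1, by simpa using h1, by simpa [hx] using h2⟩
    · cases k with
      | zero => exact ⟨0, by simp⟩
      | succ k =>
        obtain ⟨k', h1, h2⟩ := ih k
        exact ⟨k' + 1, by simpa using h1, by simpa [hx] using h2⟩

theorem exists_sum_filter_take (l : List ℕ) (k : ℕ) :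
    ∃ k', ((l.filter (fun x => x ≠ 0)).take k').sum = (l.take k).sum := by
  induction l generalizing k with
  | nil => exact ⟨0, by simp⟩
  | cons x l ih =>
    cases k with
    | zero => exact ⟨0, by simp⟩
    | succ k =>
      obtain ⟨k', h2⟩ := ih k
      by_cases hx : x = 0
      · exact ⟨k', by simpa [hx] using h2⟩
      · exact ⟨k' + 1, by simpa [hx] using h2⟩

theorem sum_flat {n : ℕ} (a : Fin n → ℕ) : (flat a).sum = ∑ i, a i := by
  have : ∀ l : List ℕ, (l.filter (fun x => x ≠ 0)).sum = l.sum := by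
    intro l
    induction l with
    | nil => rfl
    | cons x l ih =>
      by_cases hx : x = 0 <;> simp_all
  rw [flat, this, List.sum_ofFn]

theorem refines_flat_iff {n : ℕ} {a b : Fin n → ℕ} :
    Refines (flat b) (flat a) ↔ ∑ i, a i = ∑ i, b i ∧
      ∀ k ≤ n, ∃ k' ≤ n, psum a k = psum b k' := by
  have hp : ∀ (c : Fin n → ℕ) k, ((List.ofFn c).take k).sum = psum c k := fun c k =>
    List.sum_take_ofFn c k
  rw [refines_iff (by simp [flat]), sum_flat, sum_flat]
  refine and_congr_right fun _ => ⟨fun h k hk => ?_, fun h k => ?_⟩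
  · obtain ⟨k1, h1⟩ := exists_sum_filter_take (List.ofFn a) k
    obtain ⟨k2, h2⟩ := h k1
    obtain ⟨k3, h3, h4⟩ := exists_sum_take_filter (List.ofFn b) k2
    refine ⟨k3, by simpa using h3, ?_⟩
    rw [← hp, ← hp, ← h1, h4]
    exact h2
  · obtain ⟨k1, h0, h1⟩ := exists_sum_take_filter (List.ofFn a) k
    obtain ⟨k2, _, h2⟩ := h k1 (by simpa using h0)
    obtain ⟨k3, h3⟩ := exists_sum_filter_take (List.ofFn b) k2
    rw [hp] at h1 h3
    exact ⟨k3, by rw [flat, flat, ← h1, h2, h3]⟩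

/-! ### Slide polynomials from reading words -/

theorem exists_wtFin_ofSeq_iff {n l : ℕ} {f s₀ : ℕ → ℕ} (h₀ : Compat l f s₀)
    (hn : 0 < l → f 0 < n) (b : Fin n → ℕ) :
    (∃ s, Compat l f s ∧ wtFin n (ofSeq l f s) = b) ↔
      Dominates b (wtFin n (ofSeq l f (maxSeq f))) ∧
        Refines (flat b) (flat (wtFin n (ofSeq l f (maxSeq f)))) := by
  have hm := h₀.maxSeq
  have hrow : ∀ {s}, Compat l f s → ∀ t < l, s t < n := fun {s} h t ht =>
    ((h.antitone (Nat.zero_le t) ht).trans (h.1 0 (by omega))).trans_lt (hn (by omega))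
  have htop : ∀ {s}, Compat l f s → countGE s l n = 0 := fun {s} h => by
    rw [countGE, Finset.card_eq_zero, Finset.filter_eq_empty_iff]
    intro t ht
    have := hrow h t (Finset.mem_range.1 ht)
    omega
  have hbot : ∀ s, countGE s l 0 = l := fun s => by simp [countGE]
  have hsum : ∀ {s}, Compat l f s → ∑ i, wtFin n (ofSeq l f s) i = l := fun {s} h => by
    have := psum_wtFin_ofSeq h (le_refl n)
    rw [htop h, psum_of_le _ le_rfl] at this
    simpa using this
  rw [refines_flat_iff, dominates_iff, hsum hm]
  constructor
  · rintro ⟨s, hs, rfl⟩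
    refine ⟨fun k hk => ?_, (hsum hs).symm, fun k hk => ?_⟩
    · have h1 := psum_wtFin_ofSeq hs hk
      have h2 := psum_wtFin_ofSeq hm hk
      have h3 : countGE s l k ≤ countGE (maxSeq f) l k := by
        refine Finset.card_le_card fun t ht => ?_
        simp only [Finset.mem_filter, Finset.mem_range] at ht ⊢
        exact ⟨ht.1, ht.2.trans (hs.le_maxSeq ht.1)⟩
      omega
    · suffices ∃ k' ≤ n, countGE s l k' = countGE (maxSeq f) l k by
        obtain ⟨k', hk', h⟩ := this
        have h1 := psum_wtFin_ofSeq hs hk'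
        have h2 := psum_wtFin_ofSeq hm hk
        exact ⟨k', hk', by omega⟩
      have hle := countGE_le (maxSeq f) l k
      rcases Nat.eq_zero_or_pos (countGE (maxSeq f) l k) with h0 | h0
      · exact ⟨n, le_rfl, by rw [h0, htop hs]⟩
      rcases hle.eq_or_lt with h1 | h1
      · exact ⟨0, Nat.zero_le _, by rw [h1, hbot]⟩
      obtain ⟨m, hmk⟩ : ∃ m, countGE (maxSeq f) l k = m + 1 := ⟨_, (Nat.sub_add_cancel h0).symm⟩
      rw [hmk] at h1 ⊢
      have e1 := (hm.le_iff_lt_countGE (t := m) (by omega) k).2 (by omega)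
      have e2 : ¬ k ≤ maxSeq f (m + 1) := fun h => by
        have := (hm.le_iff_lt_countGE h1 k).1 h
        omega
      have e3 := (hs.2 m h1).2 (le_of_maxSeq_lt (by omega))
      refine ⟨s m, (hrow hs m (by omega)).le, ?_⟩
      have e4 := (hs.le_iff_lt_countGE (t := m) (by omega) (s m)).1 le_rfl
      have e5 : ¬ m + 1 < countGE s l (s m) := fun h => by
        have := (hs.le_iff_lt_countGE h1 (s m)).2 h
        omega
      omega
  · rintro ⟨hdom, htot, href⟩
    let s : ℕ → ℕ := fun t => Nat.findGreatest (fun k => t + psum b k < l) n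
    have hs : ∀ t < l, ∀ k ≤ n, k ≤ s t ↔ t + psum b k < l := by
      intro t ht k hk
      constructor
      · intro h
        have h1 : t + psum b (s t) < l :=
          Nat.findGreatest_spec (P := fun k => t + psum b k < l) (Nat.zero_le n)
            (by simpa [psum_zero] using ht)
        have := psum_le_psum b h
        omega
      · intro h
        exact Nat.le_findGreatest hk h
    have hsn : ∀ t, s t ≤ n := fun t => Nat.findGreatest_le n
    have hcount : ∀ k ≤ n, countGE s l k = l - psum b k := by
      intro k hk
      rw [countGE, ← Finset.card_range (l - psum b k)]
      congr 1
      ext t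
      simp only [Finset.mem_filter, Finset.mem_range]
      constructor
      · rintro ⟨h1, h2⟩
        have := (hs t h1 k hk).1 h2
        omega
      · intro h
        exact ⟨by omega, (hs t (by omega) k hk).2 (by omega)⟩
    have hsle : ∀ t < l, s t ≤ maxSeq f t := by
      intro t ht
      have h1 := (hs t ht (s t) (hsn t)).1 le_rfl
      have h2 := hdom (s t) (hsn t)
      have h3 := psum_wtFin_ofSeq hm (hsn t)
      exact (hm.le_iff_lt_countGE ht _).2 (by omega)
    have hc : Compat l f s := by
      refine ⟨fun t ht => (hsle t ht).trans (hm.1 t ht), fun t ht => ⟨?_, fun hf => ?_⟩⟩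
      · have h1 := (hs (t + 1) ht (s (t + 1)) (hsn _)).1 le_rfl
        exact (hs t (by omega) _ (hsn _)).2 (by omega)
      · have h1 := (hm.2 t ht).2 hf
        have hk : maxSeq f t ≤ n := (hrow hm t (by omega)).le
        have e1 := (hm.le_iff_lt_countGE (t := t) (by omega) (maxSeq f t)).1 le_rfl
        have e2 : ¬ t + 1 < countGE (maxSeq f) l (maxSeq f t) := fun h => by
          have := (hm.le_iff_lt_countGE ht (maxSeq f t)).2 h
          omega
        obtain ⟨k', hk', h2⟩ := href _ hk
        have h3 := psum_wtFin_ofSeq hm hk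
        have h4 := (hs t (by omega) k' hk').2 (by omega)
        by_contra! h5
        have := (hs (t + 1) ht k' hk').1 (by omega)
        omega
    refine ⟨s, hc, eq_of_psum_eq fun k hk => ?_⟩
    have h1 := psum_wtFin_ofSeq hc hk
    have h2 := hcount k hk
    have h3 : psum b k ≤ l := by
      rw [htot, ← psum_of_le b (le_refl n)]
      exact psum_le_psum b hk
    omega

theorem ofSeq_eq_of_wtFin_eq {n l : ℕ} {f s s' : ℕ → ℕ} (hn : 0 < l → f 0 < n)
    (h : Compat l f s) (h' : Compat l f s')
    (hw : wtFin n (ofSeq l f s) = wtFin n (ofSeq l f s')) : ofSeq l f s = ofSeq l f s' := by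
  have key : ∀ {u v}, Compat l f u → Compat l f v →
      wtFin n (ofSeq l f u) = wtFin n (ofSeq l f v) → ∀ t < l, u t ≤ v t := by
    intro u v hu hv huv t ht
    have hk : u t ≤ n := ((hu.antitone (Nat.zero_le t) ht).trans (hu.1 0 (by omega))).trans
      (hn (by omega)).le
    have h1 := psum_wtFin_ofSeq hu hk
    have h2 := psum_wtFin_ofSeq hv hk
    rw [huv] at h1
    have h3 := (hu.le_iff_lt_countGE ht (u t)).1 le_rfl
    exact (hv.le_iff_lt_countGE ht (u t)).2 (by omega)
  refine Finset.image_congr fun t ht => ?_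
  have ht : t < l := by simpa using ht
  have := le_antisymm (key h h' hw t ht) (key h' h hw.symm t ht)
  simp [this]

/-- The pipe dreams with a fixed reading word generate a single fundamental slide polynomial. -/
theorem exists_slideF_eq {n : ℕ} (r : List ℕ) (F : Finset (Finset (ℕ × ℕ)))
    (hF : ∀ P, P ∈ F ↔ readWord P = r) (hne : F.Nonempty) (hr : ∀ a l, r = a :: l → a < n) :
    ∃ P₀ ∈ F, (∀ P ∈ F, Dominates (wtFin n P) (wtFin n P₀)) ∧
      ∑ P ∈ F, (MvPolynomial.monomial (Finsupp.equivFunOnFinite.symm (wtFin n P)) 1 :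
        MvPolynomial (Fin n) ℤ) = slideF (wtFin n P₀) := by
  obtain ⟨Q, hQ⟩ := hne
  let f : ℕ → ℕ := fun t => r.getD t 0
  have hn : 0 < r.length → f 0 < n := fun h => by
    obtain ⟨a, l, rfl⟩ := List.exists_cons_of_length_pos h
    exact hr a l rfl
  have hmap : (List.range r.length).map f = r := by
    refine List.ext_getElem (by simp) fun t h1 h2 => ?_
    simp [f, h2]
  have hF' : ∀ P, P ∈ F ↔ ∃ s, Compat r.length f s ∧ P = ofSeq r.length f s := by
    intro P
    rw [hF]
    constructor
    · rintro rfl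
      exact exists_compat P
    · rintro ⟨s, hs, rfl⟩
      rw [hs.readWord_ofSeq, hmap]
  obtain ⟨s₀, hs₀, -⟩ := (hF' Q).1 hQ
  have key := exists_wtFin_ofSeq_iff hs₀ hn
  have key' : ∀ b : Fin n → ℕ, (∃ P ∈ F, wtFin n P = b) ↔
      Dominates b (wtFin n (ofSeq r.length f (maxSeq f))) ∧
        Refines (flat b) (flat (wtFin n (ofSeq r.length f (maxSeq f)))) := by
    intro b
    rw [← key b]
    constructor
    · rintro ⟨P, hP, rfl⟩
      obtain ⟨s, hs, rfl⟩ := (hF' P).1 hP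
      exact ⟨s, hs, rfl⟩
    · rintro ⟨s, hs, rfl⟩
      exact ⟨_, (hF' _).2 ⟨s, hs, rfl⟩, rfl⟩
  refine ⟨ofSeq r.length f (maxSeq f), (hF' _).2 ⟨_, hs₀.maxSeq, rfl⟩,
    fun P hP => ((key' _).1 ⟨P, hP, rfl⟩).1, ?_⟩
  have himg : (wcFinset n (∑ i, wtFin n (ofSeq r.length f (maxSeq f)) i)).filter
      (fun b => Dominates b (wtFin n (ofSeq r.length f (maxSeq f))) ∧
        Refines (flat b) (flat (wtFin n (ofSeq r.length f (maxSeq f))))) =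
      F.image (wtFin n) := by
    ext b
    rw [Finset.mem_filter, Finset.mem_image, ← key' b]
    refine and_iff_right_of_imp fun h => ?_
    rw [key' b, refines_flat_iff] at h
    rw [h.2.1]
    simp only [wcFinset, Fintype.mem_piFinset, Finset.mem_range, Nat.lt_succ_iff]
    exact fun i => Finset.single_le_sum (f := b) (fun _ _ => Nat.zero_le _) (Finset.mem_univ i)
  rw [slideF, himg, Finset.sum_image]
  intro P hP P' hP' hw
  obtain ⟨s, hs, rfl⟩ := (hF' P).1 hP
  obtain ⟨s', hs', rfl⟩ := (hF' P').1 hP'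
  exact ofSeq_eq_of_wtFin_eq hn hs hs' hw

/-! ### Inversions and reduced words -/

/-- The set of inversions of `w`. -/
def invSet (w : Equiv.Perm ℕ) : Set (ℕ × ℕ) := {p | p.1 < p.2 ∧ w p.2 < w p.1}

theorem invSet_swap_mul {v : Equiv.Perm ℕ} {a : ℕ} (h : v.symm a < v.symm (a + 1)) :
    invSet (Equiv.swap a (a + 1) * v) = insert (v.symm a, v.symm (a + 1)) (invSet v) := by
  ext ⟨p, q⟩
  obtain ⟨x, rfl⟩ := v.symm.surjective p
  obtain ⟨y, rfl⟩ := v.symm.surjective q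
  simp only [invSet, Set.mem_ofPred_eq, Set.mem_insert_iff, Prod.mk.injEq,
    EmbeddingLike.apply_eq_iff_eq, Equiv.Perm.mul_apply, Equiv.apply_symm_apply,
    Equiv.swap_apply_def]
  by_cases hx : x = a
  · subst hx
    by_cases hy : y = x + 1
    · subst hy
      simp [h]
    · split_ifs <;> omega
  · by_cases hx' : x = a + 1
    · subst hx'
      by_cases hy : y = a
      · subst hy
        simp
        omega
      · split_ifs <;> omega
    · split_ifs <;> omega

theorem notMem_invSet {v : Equiv.Perm ℕ} {a : ℕ} :
    (v.symm a, v.symm (a + 1)) ∉ invSet v := by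
  simp [invSet]

theorem invSet_swap_mul' {v : Equiv.Perm ℕ} {a : ℕ} (h : v.symm (a + 1) < v.symm a) :
    invSet v = insert (v.symm (a + 1), v.symm a) (invSet (Equiv.swap a (a + 1) * v)) := by
  have h1 : ∀ x, (Equiv.swap a (a + 1) * v).symm x = v.symm (Equiv.swap a (a + 1) x) := by
    intro x
    rw [Equiv.symm_apply_eq]
    simp
  have := invSet_swap_mul (v := Equiv.swap a (a + 1) * v) (a := a) (by simpa [h1] using h)
  rw [← mul_assoc, Equiv.swap_mul_self, one_mul] at this
  simpa [h1] using this

theorem wordPerm_append (l l' : List ℕ) : wordPerm (l ++ l') = wordPerm l' * wordPerm l := by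
  simp [wordPerm]

theorem wordPerm_singleton (a : ℕ) : wordPerm [a] = Equiv.swap a (a + 1) := by simp [wordPerm]

theorem wordPerm_nil : wordPerm [] = 1 := by simp [wordPerm]

theorem wordPerm_concat (l : List ℕ) (a : ℕ) :
    wordPerm (l ++ [a]) = Equiv.swap a (a + 1) * wordPerm l := by
  rw [wordPerm_append, wordPerm_singleton]

theorem finite_invSet_wordPerm (l : List ℕ) :
    (invSet (wordPerm l)).Finite ∧ (invSet (wordPerm l)).ncard ≤ l.length := by
  induction l using List.reverseRecOn with
  | nil =>
    have : invSet (wordPerm []) = ∅ := by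
      ext p
      simp [invSet, wordPerm_nil]
      omega
    simp [this]
  | append_singleton l a ih =>
    rw [wordPerm_concat]
    rcases lt_or_gt_of_ne (show (wordPerm l).symm a ≠ (wordPerm l).symm (a + 1) by simp)
      with h | h
    · rw [invSet_swap_mul h]
      refine ⟨ih.1.insert _, (Set.ncard_insert_le _ _).trans ?_⟩
      simpa using ih.2
    · have hsub : invSet (Equiv.swap a (a + 1) * wordPerm l) ⊆ invSet (wordPerm l) := by
        conv_rhs => rw [invSet_swap_mul' h]
        exact Set.subset_insert _ _
      refine ⟨ih.1.subset hsub, (Set.ncard_le_ncard hsub ih.1).trans ?_⟩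
      simpa using ih.2.trans (Nat.le_succ _)

/-- The length of `l` is the number of inversions of its permutation. -/
def LengthEqInv (l : List ℕ) : Prop := (invSet (wordPerm l)).ncard = l.length

theorem LengthEqInv.of_concat {l : List ℕ} {a : ℕ} (h : LengthEqInv (l ++ [a])) :
    LengthEqInv l ∧ invSet (wordPerm (l ++ [a])) =
      insert ((wordPerm l).symm a, (wordPerm l).symm (a + 1)) (invSet (wordPerm l)) := by
  have hl := finite_invSet_wordPerm l
  unfold LengthEqInv at *
  rw [wordPerm_concat] at *
  rcases lt_or_gt_of_ne (show (wordPerm l).symm a ≠ (wordPerm l).symm (a + 1) by simp)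
    with h1 | h1
  · refine ⟨?_, invSet_swap_mul h1⟩
    rw [invSet_swap_mul h1, Set.ncard_insert_of_notMem notMem_invSet hl.1] at h
    simpa using h
  · exfalso
    have hsub : invSet (Equiv.swap a (a + 1) * wordPerm l) ⊆ invSet (wordPerm l) := by
      conv_rhs => rw [invSet_swap_mul' h1]
      exact Set.subset_insert _ _
    have := Set.ncard_le_ncard hsub hl.1
    simp at h
    omega

theorem LengthEqInv.of_append {l l' : List ℕ} (h : LengthEqInv (l ++ l')) :
    LengthEqInv l ∧ invSet (wordPerm l) ⊆ invSet (wordPerm (l ++ l')) := by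
  induction l' using List.reverseRecOn with
  | nil => simpa using h
  | append_singleton l' a ih =>
    rw [← List.append_assoc] at h ⊢
    obtain ⟨h1, h2⟩ := h.of_concat
    refine ⟨(ih h1).1, (ih h1).2.trans ?_⟩
    rw [h2]
    exact Set.subset_insert _ _

theorem LengthEqInv.apply_succ_lt_apply_head {l : List ℕ} {a : ℕ} (h : LengthEqInv (a :: l)) :
    wordPerm (a :: l) (a + 1) < wordPerm (a :: l) a := by
  have h1 := (LengthEqInv.of_append (l := [a]) (l' := l) h).2
  have h2 : (a, a + 1) ∈ invSet (wordPerm [a]) := by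
    simp [invSet, wordPerm_singleton]
  exact (h1 h2).2

theorem wordPerm_apply_of_lt {l : List ℕ} {i x : ℕ} (h : ∀ a ∈ l, i ≤ a) (hx : x < i) :
    wordPerm l x = x := by
  induction l using List.reverseRecOn with
  | nil => simp [wordPerm_nil]
  | append_singleton l a ih =>
    have h1 := h a (by simp)
    rw [wordPerm_concat, Equiv.Perm.mul_apply, ih (fun b hb => h b (by simp [hb]))]
    exact Equiv.swap_apply_of_ne_of_ne (by omega) (by omega)

theorem wordPerm_apply_of_ge {l : List ℕ} {N x : ℕ} (h : ∀ a ∈ l, a + 1 < N) (hx : N ≤ x) :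
    wordPerm l x = x := by
  induction l using List.reverseRecOn with
  | nil => simp [wordPerm_nil]
  | append_singleton l a ih =>
    have h1 := h a (by simp)
    rw [wordPerm_concat, Equiv.Perm.mul_apply, ih (fun b hb => h b (by simp [hb]))]
    exact Equiv.swap_apply_of_ne_of_ne (by omega) (by omega)

theorem LengthEqInv.lt_of_mem {l : List ℕ} {N : ℕ} (h : LengthEqInv l)
    (hN : ∀ p ∈ invSet (wordPerm l), p.2 < N) : ∀ a ∈ l, a + 1 < N := by
  induction l using List.reverseRecOn with
  | nil => simp
  | append_singleton l a ih =>
    obtain ⟨h1, h2⟩ := h.of_concat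
    rw [h2] at hN
    have ih' := ih h1 (fun p hp => hN p (Set.mem_insert_of_mem _ hp))
    intro b hb
    simp only [List.mem_append, List.mem_singleton] at hb
    rcases hb with hb | rfl
    · exact ih' b hb
    · have h3 := hN _ (Set.mem_insert _ _)
      simp only at h3
      by_contra! h4
      have h5 := wordPerm_apply_of_ge ih' h4
      rw [← h5, Equiv.symm_apply_apply] at h3
      omega

theorem apply_lt_of_fixed {w : Equiv.Perm ℕ} {N : ℕ} (hw : ∀ i, N ≤ i → w i = i) {x : ℕ}
    (hx : x < N) : w x < N := by
  by_contra! h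
  have := w.injective (hw _ h)
  omega

theorem le_apply_of_fixed {w : Equiv.Perm ℕ} {m : ℕ} (hw : ∀ i < m, w i = i) {x : ℕ}
    (hx : m ≤ x) : m ≤ w x := by
  by_contra! h
  have := w.injective (hw _ h)
  omega

theorem snd_lt_of_mem_invSet {w : Equiv.Perm ℕ} {N : ℕ} (hw : ∀ i, N ≤ i → w i = i)
    {p : ℕ × ℕ} (hp : p ∈ invSet w) : p.2 < N := by
  by_contra! h
  obtain ⟨h1, h2⟩ := hp
  rw [hw _ h] at h2
  have := w.injective (hw (w p.1) (by omega))
  omega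

theorem fst_ge_of_mem_invSet {w : Equiv.Perm ℕ} {m : ℕ} (hw : ∀ i < m, w i = i)
    {p : ℕ × ℕ} (hp : p ∈ invSet w) : m ≤ p.1 := by
  by_contra! h
  obtain ⟨h1, h2⟩ := hp
  rw [hw _ h] at h2
  have := w.injective (hw (w p.2) (by omega))
  omega

theorem finite_invSet {w : Equiv.Perm ℕ} {N : ℕ} (hw : ∀ i, N ≤ i → w i = i) :
    (invSet w).Finite :=
  ((Finset.range N ×ˢ Finset.range N).finite_toSet).subset fun p hp => by
    have h1 := snd_lt_of_mem_invSet hw hp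
    have h2 := hp.1
    simp
    omega

theorem lehmer_eq_rowWt {w : Equiv.Perm ℕ} (hI : (invSet w).Finite) (i : ℕ) :
    lehmer w i = rowWt hI.toFinset i := by
  rw [lehmer, rowWt, ← Set.ncard_coe_finset,
    ← Set.ncard_image_of_injective {j | i < j ∧ w j < w i} (Prod.mk_right_injective i)]
  congr 1
  ext ⟨a, b⟩
  simp [invSet]
  aesop

theorem lehmer_eq_sub {w : Equiv.Perm ℕ} {m : ℕ} (hw : ∀ i < m, w i = i) :
    lehmer w m = w m - m := by
  rw [lehmer, ← Set.ncard_image_of_injective _ w.injective]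
  have : w '' {j | m < j ∧ w j < w m} = Finset.Ico m (w m) := by
    ext y
    simp only [Set.mem_image, Set.mem_ofPred_eq, Finset.coe_Ico, Set.mem_Ico]
    constructor
    · rintro ⟨j, ⟨h1, h2⟩, rfl⟩
      exact ⟨le_apply_of_fixed hw h1.le, h2⟩
    · rintro ⟨h1, h2⟩
      obtain ⟨j, rfl⟩ := w.surjective y
      refine ⟨j, ⟨?_, h2⟩, rfl⟩
      by_contra! h3
      rcases h3.eq_or_lt with rfl | h4
      · omega
      · rw [hw j h4] at h1
        omega
  rw [this, Set.ncard_coe_finset, Nat.card_Ico]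

/-! ### The bottom pipe dream -/

theorem wordPerm_range_map (m k x : ℕ) :
    wordPerm ((List.range k).map (m + ·)) x =
      if x < m then x else if x = m then m + k else if x ≤ m + k then x - 1 else x := by
  induction k with
  | zero =>
    simp [wordPerm_nil]
    split_ifs <;> omega
  | succ k ih =>
    rw [List.range_succ, List.map_append, List.map_singleton, wordPerm_concat,
      Equiv.Perm.mul_apply, ih, Equiv.swap_apply_def]
    split_ifs <;> omega

/-- The left-justified crosses with `c i` crosses in row `i`, for rows `m, …, m + d - 1`, in
reading order. -/
def leftJustified (c : ℕ → ℕ) : ℕ → ℕ → List (ℕ × ℕ)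
  | _, 0 => []
  | m, d + 1 => leftJustified c (m + 1) d ++ (List.range (c m)).map (fun j => (m, j))

theorem mem_leftJustified {c : ℕ → ℕ} {m d : ℕ} {p : ℕ × ℕ} :
    p ∈ leftJustified c m d ↔ m ≤ p.1 ∧ p.1 < m + d ∧ p.2 < c p.1 := by
  induction d generalizing m with
  | zero =>
    simp [leftJustified]
    omega
  | succ d ih =>
    obtain ⟨i, j⟩ := p
    simp only [leftJustified, List.mem_append, ih, List.mem_map, List.mem_range, Prod.mk.injEq]
    constructor
    · rintro (h | ⟨a, h, rfl, rfl⟩)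
      · omega
      · exact ⟨le_rfl, by omega, h⟩
    · rintro ⟨h1, h2, h3⟩
      rcases h1.eq_or_lt with rfl | h1
      · exact Or.inr ⟨j, h3, rfl, rfl⟩
      · exact Or.inl ⟨h1, by omega, h3⟩

theorem pairwise_leftJustified (c : ℕ → ℕ) (m d : ℕ) :
    (leftJustified c m d).Pairwise ReadsBefore := by
  induction d generalizing m with
  | zero => simp [leftJustified]
  | succ d ih =>
    rw [leftJustified, List.pairwise_append]
    refine ⟨ih _, ?_, ?_⟩
    · rw [List.pairwise_map]
      exact List.pairwise_lt_range.imp fun h => Or.inr ⟨rfl, h⟩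
    · intro p hp q hq
      have := (mem_leftJustified.1 hp).1
      simp only [List.mem_map] at hq
      obtain ⟨_, -, rfl⟩ := hq
      exact Or.inl this

theorem leftJustified_congr {c c' : ℕ → ℕ} {m : ℕ} (h : ∀ i, m ≤ i → c i = c' i) (d : ℕ) :
    leftJustified c m d = leftJustified c' m d := by
  induction d generalizing m with
  | zero => rfl
  | succ d ih => rw [leftJustified, leftJustified, ih fun i hi => h i (by omega), h m le_rfl]

theorem wordPerm_leftJustified {w : Equiv.Perm ℕ} {m d : ℕ} (h1 : ∀ i < m, w i = i)
    (h2 : ∀ i, m + d ≤ i → w i = i) :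
    wordPerm ((leftJustified (lehmer w) m d).map (fun p => p.1 + p.2)) = w := by
  induction d generalizing m w with
  | zero =>
    ext i
    rw [leftJustified, List.map_nil, wordPerm_nil, Equiv.Perm.one_apply]
    rcases lt_or_ge i m with h | h
    · rw [h1 i h]
    · rw [h2 i h]
  | succ d ih =>
    set k := lehmer w m with hk
    have hwm : w m = m + k := by
      rw [hk, lehmer_eq_sub h1]
      have := le_apply_of_fixed h1 (le_refl m)
      omega
    set ρ := wordPerm ((List.range k).map (m + ·)) with hρ
    have hρx : ∀ x, ρ x = if x < m then x else if x = m then m + k else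
        if x ≤ m + k then x - 1 else x := wordPerm_range_map m k
    have hwN := apply_lt_of_fixed h2 (x := m) (by omega)
    have hv : ∀ x, ρ ((ρ⁻¹ * w) x) = w x := fun x => by simp
    have hv1 : ∀ i < m + 1, (ρ⁻¹ * w) i = i := by
      intro i hi
      apply ρ.injective
      rw [hv, hρx]
      rcases Nat.lt_succ_iff_lt_or_eq.1 hi with h | rfl
      · rw [if_pos h, h1 i h]
      · simp [hwm]
    have hv2 : ∀ i, m + 1 + d ≤ i → (ρ⁻¹ * w) i = i := by
      intro i hi
      apply ρ.injective
      rw [hv, hρx, h2 i (by omega)]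
      split_ifs <;> omega
    have hlt : ∀ p q, m < p → m < q → ((ρ⁻¹ * w) p < (ρ⁻¹ * w) q ↔ w p < w q) := by
      intro p q hp hq
      have e1 := le_apply_of_fixed hv1 (x := p) hp
      have e2 := le_apply_of_fixed hv1 (x := q) hq
      rw [← hv p, ← hv q, hρx, hρx]
      split_ifs <;> omega
    have hleh : ∀ i, m + 1 ≤ i → lehmer w i = lehmer (ρ⁻¹ * w) i := by
      intro i hi
      unfold lehmer
      congr 1
      ext j
      simp only [Set.mem_ofPred_eq]
      exact and_congr_right fun hj => (hlt j i (by omega) hi).symm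
    rw [leftJustified, List.map_append, wordPerm_append, leftJustified_congr hleh,
      ih hv1 hv2, List.map_map]
    change ρ * (ρ⁻¹ * w) = w
    simp

theorem exists_fixed_wordPerm (l : List ℕ) : ∃ N, ∀ i, N ≤ i → wordPerm l i = i :=
  ⟨l.sum + 2, fun i hi => wordPerm_apply_of_ge (N := l.sum + 2)
    (fun a ha => by have := List.le_sum_of_mem ha; omega) hi⟩

/-- The left-justified pipe dream with row weights the Lehmer code of `w`. -/
noncomputable def bottomPD (w : Equiv.Perm ℕ) (N : ℕ) : Finset (ℕ × ℕ) :=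
  (leftJustified (lehmer w) 0 N).toFinset

theorem mem_bottomPD {w : Equiv.Perm ℕ} {N : ℕ} {p : ℕ × ℕ} :
    p ∈ bottomPD w N ↔ p.1 < N ∧ p.2 < lehmer w p.1 := by
  simp [bottomPD, mem_leftJustified]

theorem lehmer_eq_zero {w : Equiv.Perm ℕ} {N : ℕ} (hw : ∀ i, N ≤ i → w i = i) {i : ℕ}
    (hi : N ≤ i) : lehmer w i = 0 := by
  rw [lehmer]
  convert Set.ncard_empty ℕ
  ext j
  simp only [Set.mem_ofPred_eq, Set.mem_empty_iff_false, iff_false]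
  rintro ⟨h1, h2⟩
  rw [hw i hi, hw j (by omega)] at h2
  omega

theorem rowWt_bottomPD {w : Equiv.Perm ℕ} {N : ℕ} (hw : ∀ i, N ≤ i → w i = i) (i : ℕ) :
    rowWt (bottomPD w N) i = lehmer w i := by
  have : (bottomPD w N).filter (fun p => p.1 = i) =
      (Finset.range (lehmer w i)).image (fun j => (i, j)) := by
    ext ⟨a, b⟩
    simp only [Finset.mem_filter, mem_bottomPD, Finset.mem_image, Finset.mem_range,
      Prod.mk.injEq]
    constructor
    · rintro ⟨⟨h1, h2⟩, rfl⟩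
      exact ⟨b, h2, rfl, rfl⟩
    · rintro ⟨_, h, rfl, rfl⟩
      refine ⟨⟨?_, h⟩, rfl⟩
      by_contra! h1
      rw [lehmer_eq_zero hw h1] at h
      omega
  rw [rowWt, this, Finset.card_image_of_injective _ (Prod.mk_right_injective i),
    Finset.card_range]

theorem card_eq_sum_rowWt {P : Finset (ℕ × ℕ)} {N : ℕ} (h : ∀ p ∈ P, p.1 < N) :
    P.card = ∑ i ∈ Finset.range N, rowWt P i :=
  Finset.card_eq_sum_card_fiberwise fun p hp => by simpa using h p hp

theorem card_bottomPD {w : Equiv.Perm ℕ} {N : ℕ} (hw : ∀ i, N ≤ i → w i = i) :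
    (bottomPD w N).card = (invSet w).ncard := by
  have hI := finite_invSet hw
  rw [card_eq_sum_rowWt (N := N) fun p hp => (mem_bottomPD.1 hp).1,
    Set.ncard_eq_toFinset_card _ hI, card_eq_sum_rowWt (N := N)]
  · exact Finset.sum_congr rfl fun i _ => by rw [rowWt_bottomPD hw, lehmer_eq_rowWt hI]
  · intro p hp
    have hp : p ∈ invSet w := by simpa using hp
    exact hp.1.trans (snd_lt_of_mem_invSet hw hp)

theorem wordPerm_bottomPD {w : Equiv.Perm ℕ} {N : ℕ} (hw : ∀ i, N ≤ i → w i = i) :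
    wordPerm (readWord (bottomPD w N)) = w := by
  rw [readWord_eq_map, crossList_eq (pairwise_leftJustified (lehmer w) 0 N)
    (by simp [bottomPD])]
  exact wordPerm_leftJustified (by simp) (by simpa using hw)

theorem isReducedWord_iff {l : List ℕ} : IsReducedWord l ↔ LengthEqInv l := by
  constructor
  · intro h
    obtain ⟨N, hN⟩ := exists_fixed_wordPerm l
    have := h _ (wordPerm_bottomPD hN)
    rw [length_readWord, card_bottomPD hN] at this
    exact le_antisymm (finite_invSet_wordPerm l).2 this
  · intro h l' hl'
    have := (finite_invSet_wordPerm l').2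
    rwa [hl', h] at this

theorem isPD_bottomPD {w : Equiv.Perm ℕ} {N : ℕ} (hw : ∀ i, N ≤ i → w i = i) :
    IsPD w (bottomPD w N) := by
  refine ⟨wordPerm_bottomPD hw, ?_⟩
  rw [isReducedWord_iff, LengthEqInv, wordPerm_bottomPD hw, length_readWord, card_bottomPD hw]

/-! ### Weights of pipe dreams dominate the Lehmer code -/

theorem readWord_split (P : Finset (ℕ × ℕ)) (i : ℕ) :
    readWord P = readWord (P.filter (fun p => i ≤ p.1)) ++
      readWord (P.filter (fun p => ¬ i ≤ p.1)) := by
  rw [← readWord_union, Finset.filter_union_filter_not_eq]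
  intro p hp q hq
  simp only [Finset.mem_filter] at hp hq
  omega

theorem le_of_mem_readWord_filter {P : Finset (ℕ × ℕ)} {i a : ℕ}
    (h : a ∈ readWord (P.filter (fun p => i ≤ p.1))) : i ≤ a := by
  obtain ⟨p, hp, rfl⟩ := mem_readWord.1 h
  have := (Finset.mem_filter.1 hp).2
  omega

theorem invSet_filter_subset {w : Equiv.Perm ℕ} {P : Finset (ℕ × ℕ)} (hP : IsPD w P) (i : ℕ)
    (hI : (invSet w).Finite) :
    invSet (wordPerm (readWord (P.filter (fun p => i ≤ p.1)))) ⊆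
        (hI.toFinset.filter (fun p => i ≤ p.1) : Finset (ℕ × ℕ)) ∧
      (invSet (wordPerm (readWord (P.filter (fun p => i ≤ p.1))))).ncard =
        (P.filter (fun p => i ≤ p.1)).card := by
  have h := isReducedWord_iff.1 hP.2
  rw [readWord_split P i] at h
  have h1 := h.of_append
  rw [← readWord_split, hP.1] at h1
  refine ⟨fun p hp => ?_, ?_⟩
  · simp only [Finset.coe_filter, Set.Finite.mem_toFinset, Set.mem_ofPred_eq]
    exact ⟨h1.2 hp, fst_ge_of_mem_invSet
      (fun x hx => wordPerm_apply_of_lt (fun a => le_of_mem_readWord_filter) hx) hp⟩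
  · rw [h1.1, length_readWord]

theorem IsPD.card_eq {w : Equiv.Perm ℕ} {P : Finset (ℕ × ℕ)} (hP : IsPD w P)
    (hI : (invSet w).Finite) : P.card = hI.toFinset.card := by
  have h := isReducedWord_iff.1 hP.2
  rw [LengthEqInv, hP.1, length_readWord] at h
  rw [← h, Set.ncard_eq_toFinset_card _ hI]

theorem lehmerFin_eq {n : ℕ} {w : Equiv.Perm ℕ} (hI : (invSet w).Finite) :
    lehmerFin n w = wtFin n hI.toFinset :=
  funext fun i => lehmer_eq_rowWt hI i

theorem IsPD.dominates {n : ℕ} {w : Equiv.Perm ℕ} {P : Finset (ℕ × ℕ)} (hP : IsPD w P)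
    (hI : (invSet w).Finite) : Dominates (wtFin n P) (lehmerFin n w) := by
  rw [dominates_iff, lehmerFin_eq hI]
  intro k hk
  have h1 : psum (wtFin n P) k + _ = _ := psum_rowWt_add P hk
  have h2 : psum (wtFin n hI.toFinset) k + _ = _ := psum_rowWt_add hI.toFinset hk
  have h3 := hP.card_eq hI
  have h4 := invSet_filter_subset hP k hI
  have h5 := Set.ncard_le_ncard h4.1 (Finset.finite_toSet _)
  rw [Set.ncard_coe_finset, h4.2] at h5
  omega

theorem eq_range'_of_wordPerm {l : List ℕ} {i : ℕ} (hl : l.Pairwise (· < ·))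
    (hi : ∀ a ∈ l, i ≤ a) (h : i + l.length ≤ wordPerm l i) : l = List.range' i l.length := by
  induction l generalizing i with
  | nil => rfl
  | cons a l ih =>
    rw [List.pairwise_cons] at hl
    have h1 : wordPerm (a :: l) i = wordPerm l (Equiv.swap a (a + 1) i) := by
      rw [← List.singleton_append, wordPerm_append, wordPerm_singleton]
      rfl
    rcases (hi a (by simp)).eq_or_lt with rfl | ha
    · rw [h1, Equiv.swap_apply_left] at h
      have h2 : i + (l.length + 1) ≤ wordPerm l (i + 1) := h
      rw [List.length_cons, List.range'_succ]
      rw [← ih (i := i + 1) hl.2 (fun b hb => hl.1 b hb) (by omega)]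
    · rw [h1, Equiv.swap_apply_of_ne_of_ne (by omega) (by omega),
        wordPerm_apply_of_lt (i := a) (fun b hb => (hl.1 b hb).le) ha] at h
      simp at h

theorem pairwise_lt_readWord_row (P : Finset (ℕ × ℕ)) (i : ℕ) :
    (readWord (P.filter (fun p => p.1 = i))).Pairwise (· < ·) := by
  rw [readWord_eq_map, List.pairwise_map]
  refine (pairwise_crossList _).imp_of_mem ?_
  intro p q hp hq h
  have h1 := (Finset.mem_filter.1 (mem_crossList.1 hp)).2
  have h2 := (Finset.mem_filter.1 (mem_crossList.1 hq)).2
  unfold ReadsBefore at h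
  omega

theorem IsPD.mem_iff_of_wtFin_eq {n : ℕ} {w : Equiv.Perm ℕ} {P : Finset (ℕ × ℕ)}
    (hP : IsPD w P) (hI : (invSet w).Finite) (hwt : wtFin n P = lehmerFin n w) {i : ℕ}
    (hi : i < n) (j : ℕ) : (i, j) ∈ P ↔ j < lehmer w i := by
  set u := wordPerm (readWord (P.filter (fun p => i ≤ p.1))) with hu
  have hinv : invSet u = (hI.toFinset.filter (fun p => i ≤ p.1) : Finset (ℕ × ℕ)) := by
    have h4 := invSet_filter_subset hP i hI
    refine Set.eq_of_subset_of_ncard_le h4.1 ?_ (Finset.finite_toSet _)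
    rw [h4.2, Set.ncard_coe_finset]
    have h1 : psum (wtFin n P) i + _ = _ := psum_rowWt_add P hi.le
    have h2 : psum (wtFin n hI.toFinset) i + _ = _ := psum_rowWt_add hI.toFinset hi.le
    have h3 := hP.card_eq hI
    rw [hwt, lehmerFin_eq hI] at h1
    omega
  have hleh : lehmer w i = lehmer u i := by
    unfold lehmer
    congr 1
    ext j
    have := Set.ext_iff.1 hinv (i, j)
    simp [invSet] at this ⊢
    tauto
  have hufix : ∀ x < i, u x = x := fun x hx =>
    wordPerm_apply_of_lt (fun a => le_of_mem_readWord_filter) hx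
  have hrow : rowWt P i = lehmer w i := congrFun hwt ⟨i, hi⟩
  have hsplit : readWord (P.filter (fun p => i ≤ p.1)) =
      readWord (P.filter (fun p => i + 1 ≤ p.1)) ++ readWord (P.filter (fun p => p.1 = i)) := by
    rw [← readWord_union]
    · congr 1
      ext p
      simp only [Finset.mem_filter, Finset.mem_union, ← and_or_left]
      exact and_congr_right fun _ => by omega
    · intro p hp q hq
      simp only [Finset.mem_filter] at hp hq
      omega
  have hui : u i = wordPerm (readWord (P.filter (fun p => p.1 = i))) i := by
    rw [hu, hsplit, wordPerm_append, Equiv.Perm.mul_apply,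
      wordPerm_apply_of_lt (i := i + 1) (fun a => le_of_mem_readWord_filter) (Nat.lt_succ_self i)]
  have hlen : (readWord (P.filter (fun p => p.1 = i))).length = lehmer w i := by
    rw [length_readWord, ← hrow, rowWt]
  have hword := eq_range'_of_wordPerm (pairwise_lt_readWord_row P i)
    (i := i) (fun a ha => by
      obtain ⟨p, hp, rfl⟩ := mem_readWord.1 ha
      have := (Finset.mem_filter.1 hp).2
      omega)
    (by
      rw [hlen, hleh, lehmer_eq_sub hufix, ← hui]
      have := le_apply_of_fixed hufix (le_refl i)
      omega)
  rw [hlen] at hword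
  have hmem : i + j ∈ readWord (P.filter (fun p => p.1 = i)) ↔ (i, j) ∈ P := by
    rw [mem_readWord]
    constructor
    · rintro ⟨⟨a, b⟩, hp, hab⟩
      obtain ⟨h1, rfl⟩ := Finset.mem_filter.1 hp
      simp only [add_right_inj] at hab
      rwa [← hab]
    · intro h
      exact ⟨(i, j), by simp [h], rfl⟩
  rw [← hmem, hword, List.mem_range'_1]
  omega

theorem IsPD.add_lt {w : Equiv.Perm ℕ} {N : ℕ} (hw : ∀ i, N ≤ i → w i = i)
    {P : Finset (ℕ × ℕ)} (hP : IsPD w P) {p : ℕ × ℕ} (hp : p ∈ P) : p.1 + p.2 + 1 < N := by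
  refine (isReducedWord_iff.1 hP.2).lt_of_mem ?_ _ (mem_readWord.2 ⟨p, hp, rfl⟩)
  rw [hP.1]
  exact fun q hq => snd_lt_of_mem_invSet hw hq

theorem finite_setOf_isPD {w : Equiv.Perm ℕ} {N : ℕ} (hw : ∀ i, N ≤ i → w i = i) :
    {P : Finset (ℕ × ℕ) | IsPD w P}.Finite := by
  refine ((Finset.range N ×ˢ Finset.range N).powerset.finite_toSet).subset fun P hP => ?_
  simp only [Finset.coe_powerset, Set.mem_preimage, Set.mem_powerset_iff, Finset.coe_subset]
  intro p hp
  have := IsPD.add_lt hw hP hp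
  simp only [Finset.mem_product, Finset.mem_range]
  omega

theorem lt_of_mem_invSet {n : ℕ} {w : Equiv.Perm ℕ} (hdes : ∀ i : ℕ, n ≤ i + 1 → w i < w (i + 1))
    {p : ℕ × ℕ} (hp : p ∈ invSet w) : p.1 + 1 < n := by
  by_contra! h
  obtain ⟨h1, h2⟩ := hp
  have hlt : ∀ q, p.1 + 1 ≤ q → w p.1 < w q := by
    intro q hq
    induction q, hq using Nat.le_induction with
    | base => exact hdes _ h
    | succ m hm ih => exact ih.trans (hdes m (by omega))
  exact absurd (hlt p.2 h1) h2.not_gt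

/-- A pipe dream whose weight is the Lehmer code is the left-justified one. -/
theorem IsPD.eq_bottomPD {n N : ℕ} {w : Equiv.Perm ℕ} (hw : ∀ i, N ≤ i → w i = i)
    (hdes : ∀ i : ℕ, n ≤ i + 1 → w i < w (i + 1)) {P : Finset (ℕ × ℕ)} (hP : IsPD w P)
    (hwt : wtFin n P = lehmerFin n w) : P = bottomPD w N := by
  have hI := finite_invSet hw
  have hIn : hI.toFinset.filter (fun p => n ≤ p.1) = ∅ := by
    rw [Finset.filter_eq_empty_iff]
    intro p hp
    have := lt_of_mem_invSet hdes (hI.mem_toFinset.1 hp)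
    omega
  have hPn : P.filter (fun p => n ≤ p.1) = ∅ := by
    have h1 : psum (wtFin n P) n + _ = _ := psum_rowWt_add P le_rfl
    have h2 : psum (wtFin n hI.toFinset) n + _ = _ := psum_rowWt_add hI.toFinset le_rfl
    rw [hwt, lehmerFin_eq hI, hP.card_eq hI] at h1
    rw [hIn, Finset.card_empty] at h2
    exact Finset.card_eq_zero.1 (by omega)
  ext ⟨i, j⟩
  rw [mem_bottomPD]
  simp only
  have hz : N ≤ i → lehmer w i = 0 := lehmer_eq_zero hw
  rcases lt_or_ge i n with hi | hi
  · rw [hP.mem_iff_of_wtFin_eq hI hwt hi]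
    exact ⟨fun h => ⟨by by_contra! h1; rw [hz h1] at h; omega, h⟩, fun h => h.2⟩
  · have h1 : (i, j) ∉ P := (Finset.filter_eq_empty_iff.1 hPn · hi)
    have h2 : lehmer w i = 0 := by
      rw [lehmer_eq_rowWt hI, rowWt, Finset.card_eq_zero, Finset.filter_eq_empty_iff]
      rintro p hp rfl
      exact Finset.filter_eq_empty_iff.1 hIn hp hi
    simp [h1, h2]

/-- `𝔖_w = 𝔉_{L(w)} + Σ_{b > L(w)} c_{w,b} 𝔉_b` with nonnegative integer
coefficients, the sum being over weak compositions strictly dominating the Lehmer code. -/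
theorem schubert_fundamentalSlide_triangular (n : ℕ) (w : Equiv.Perm ℕ)
    (hfin : ∃ N, ∀ i, N ≤ i → w i = i)
    (hdes : ∀ i : ℕ, n ≤ i + 1 → w i < w (i + 1)) :
    ∃ c : (Fin n → ℕ) → ℕ, {b | c b ≠ 0}.Finite ∧
      SchubertPoly n w = slideF (lehmerFin n w) +
        ∑ᶠ b ∈ {b : Fin n → ℕ | Dominates b (lehmerFin n w) ∧ b ≠ lehmerFin n w},
          (c b : ℤ) • slideF b := by
  obtain ⟨N, hN⟩ := hfin
  have hI := finite_invSet hN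
  have hPD := finite_setOf_isPD hN
  set F := hPD.toFinset with hF
  have hmemF : ∀ P, P ∈ F ↔ IsPD w P := fun P => by simp [hF]
  have hB := isPD_bottomPD hN
  have hBwt : wtFin n (bottomPD w N) = lehmerFin n w := funext fun i => rowWt_bottomPD hN i
  set R := F.image readWord with hR
  have hr₀ : readWord (bottomPD w N) ∈ R := Finset.mem_image_of_mem _ ((hmemF _).2 hB)
  have hfib : ∀ r ∈ R, ∃ P₀, IsPD w P₀ ∧ readWord P₀ = r ∧
      (∀ P, IsPD w P → readWord P = r → Dominates (wtFin n P) (wtFin n P₀)) ∧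
      ∑ P ∈ F with readWord P = r,
        (MvPolynomial.monomial (Finsupp.equivFunOnFinite.symm (wtFin n P)) 1 :
          MvPolynomial (Fin n) ℤ) = slideF (wtFin n P₀) := by
    intro r hr
    obtain ⟨Q, hQ, rfl⟩ := Finset.mem_image.1 hr
    have hQ := (hmemF Q).1 hQ
    obtain ⟨P₀, h1, h2, h3⟩ := exists_slideF_eq (n := n) (readWord Q)
      (F.filter fun P => readWord P = readWord Q)
      (fun P => by
        rw [Finset.mem_filter, hmemF]
        refine and_iff_right_of_imp fun h => ?_
        rw [IsPD, h]
        exact hQ)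
      ⟨Q, Finset.mem_filter.2 ⟨(hmemF Q).2 hQ, rfl⟩⟩
      (fun a l hal => by
        have h4 := (isReducedWord_iff.1 hQ.2)
        rw [hal] at h4
        have h5 := h4.apply_succ_lt_apply_head
        rw [← hal, hQ.1] at h5
        by_contra! h6
        have := hdes a (by omega)
        omega)
    simp only [Finset.mem_filter, hmemF] at h1 h2
    exact ⟨P₀, h1.1, h1.2, fun P hP hr => h2 P ⟨hP, hr⟩, h3⟩
  choose! T hT hTr hTdom hTsum using hfib
  have hTbot : wtFin n (T (readWord (bottomPD w N))) = lehmerFin n w :=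
    Dominates.antisymm (hBwt ▸ hTdom _ hr₀ _ hB rfl) ((hT _ hr₀).dominates hI)
  have hTne : ∀ r ∈ R.erase (readWord (bottomPD w N)), wtFin n (T r) ≠ lehmerFin n w := by
    intro r hr h
    rw [Finset.mem_erase] at hr
    apply hr.1
    rw [← hTr r hr.2, (hT r hr.2).eq_bottomPD hN hdes h]
  set R' := R.erase (readWord (bottomPD w N)) with hR'
  have hsum : SchubertPoly n w = ∑ r ∈ R, slideF (wtFin n (T r)) := by
    rw [SchubertPoly, finsum_mem_eq_finite_toFinset_sum _ hPD,
      ← Finset.sum_fiberwise_of_maps_to (t := R) (g := readWord)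
        (fun P hP => Finset.mem_image_of_mem _ hP)]
    exact Finset.sum_congr rfl hTsum
  have hc : ∀ b, (R'.filter fun r => wtFin n (T r) = b).card ≠ 0 →
      b ∈ R'.image fun r => wtFin n (T r) := by
    intro b hb
    obtain ⟨r, hr⟩ := Finset.card_ne_zero.1 hb
    rw [Finset.mem_filter] at hr
    exact Finset.mem_image.2 ⟨r, hr⟩
  refine ⟨fun b => (R'.filter fun r => wtFin n (T r) = b).card,
    (Finset.finite_toSet (R'.image fun r => wtFin n (T r))).subset hc, ?_⟩
  rw [hsum, ← Finset.add_sum_erase R _ hr₀, hTbot,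
    finsum_mem_eq_sum_of_inter_support_eq (t := R'.image fun r => wtFin n (T r)),
    ← Finset.sum_fiberwise_of_maps_to (s := R') (t := R'.image fun r => wtFin n (T r))
      (g := fun r => wtFin n (T r)) (fun r hr => Finset.mem_image_of_mem _ hr)]
  · congr 1
    refine Finset.sum_congr rfl fun b _ => ?_
    rw [Finset.sum_congr rfl (g := fun _ => slideF b)
      (fun r hr => by rw [(Finset.mem_filter.1 hr).2]), Finset.sum_const]
    simp
  · ext b
    simp only [Set.mem_inter_iff, Set.mem_ofPred_eq, Finset.mem_coe]
    refine and_congr_left fun hb => ⟨fun _ => hc b fun h => hb (by simp [h]), fun h => ?_⟩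
    obtain ⟨r, hr, rfl⟩ := Finset.mem_image.1 h
    exact ⟨(hT r (Finset.mem_of_mem_erase hr)).dominates hI, hTne r hr⟩

end SlidePaper
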